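/- arXiv:2601.00350 — 4 statements merged into one kernel-verified Lean document; each statement's English description precedes it below -/
import Mathlib

section
/- For every σ > 0 and every s > 0, ∫₀^{σ√(2s)} (1 − e^{−(s − r²/(2σ²))}) · (r/σ²) · e^{−r²/(2σ²)} dr = 1 − (1 + s)e^{−s}. Consequently, since 1 − (1+s)e^{−s} < 1 − e^{−s} for all s > 0, the subjective detection probability of the uniformly optimal plan for a circular bivariate normal prior is strictly less than its true detection probability at every positive search time. -/
open Real intervalIntegral

/-- Example 4 (continuous case): for every `σ > 0` and `s > 0`, the subjective
detection probability of the uniformly optimal plan for a circular bivariate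
normal prior, written in polar coordinates, equals `1 - (1+s)e^{-s}`, which is
strictly less than the true detection probability `1 - e^{-s}`. -/
theorem stmt_7 (σ s : ℝ) (hσ : 0 < σ) (hs : 0 < s) :
    (∫ r in (0 : ℝ)..(σ * Real.sqrt (2 * s)),
        (1 - Real.exp (-(s - r ^ 2 / (2 * σ ^ 2)))) * (r / σ ^ 2)
          * Real.exp (-(r ^ 2) / (2 * σ ^ 2)))
      = 1 - (1 + s) * Real.exp (-s) ∧
    1 - (1 + s) * Real.exp (-s) < 1 - Real.exp (-s) := by
  constructor
  · have hσ' : σ ≠ 0 := hσ.ne'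
    have key : ∀ r ∈ Set.uIcc (0 : ℝ) (σ * Real.sqrt (2 * s)),
        HasDerivAt (fun r : ℝ => -Real.exp (-(r ^ 2) / (2 * σ ^ 2))
          - r ^ 2 / (2 * σ ^ 2) * Real.exp (-s))
        ((1 - Real.exp (-(s - r ^ 2 / (2 * σ ^ 2)))) * (r / σ ^ 2)
          * Real.exp (-(r ^ 2) / (2 * σ ^ 2))) r := by
      intro r _
      have h0 : HasDerivAt (fun r : ℝ => r ^ 2) (2 * r) r := by
        simpa using hasDerivAt_pow 2 r
      have h1 := ((h0.neg.div_const (2 * σ ^ 2)).exp.neg).sub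
        ((h0.div_const (2 * σ ^ 2)).mul_const (Real.exp (-s)))
      refine h1.congr_deriv ?_
      have e : Real.exp (-(s - r ^ 2 / (2 * σ ^ 2))) * Real.exp (-(r ^ 2) / (2 * σ ^ 2))
          = Real.exp (-s) := by
        rw [← Real.exp_add]
        congr 1
        ring
      have e2 : (1 - Real.exp (-(s - r ^ 2 / (2 * σ ^ 2)))) * (r / σ ^ 2)
          * Real.exp (-(r ^ 2) / (2 * σ ^ 2))
          = (r / σ ^ 2) * (Real.exp (-(r ^ 2) / (2 * σ ^ 2)) - Real.exp (-s)) := by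
        rw [← e]
        ring
      rw [e2]
      simp only [Pi.neg_apply]
      field_simp
    rw [intervalIntegral.integral_eq_sub_of_hasDerivAt key
      (Continuous.intervalIntegrable (by fun_prop) _ _)]
    have h2 : (σ * Real.sqrt (2 * s)) ^ 2 = s * (2 * σ ^ 2) := by
      rw [mul_pow, Real.sq_sqrt (by positivity)]
      ring
    have h3 : s * (2 * σ ^ 2) / (2 * σ ^ 2) = s := by field_simp
    simp only [h2, neg_div, h3]
    simp
    ring
  · have := mul_pos hs (Real.exp_pos (-s))
    linarith
end

section
/- For every u > 0, 1 − (1 + u/2)·e^{−u/2} > 1 − (4/3)e^{−u/4} + (1/3)e^{−u}; equivalently, (4/3)e^{−u/4} − (1/3)e^{−u} > (1 + u/2)e^{−u/2}. Moreover 1 − e^{−u} > 1 − e^{−u/2} for all u > 0. In words: the uniformly optimal plan φ* has strictly larger subjective detection probability than the alternative plan φ at every positive time, while φ has strictly larger true detection probability than φ*. -/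
open Real

/-- Example 6 (continuous case), comparison: for every `u > 0` the uniformly
optimal plan has strictly larger subjective detection probability
`1 - (1+u/2)e^{-u/2} > 1 - (4/3)e^{-u/4} + (1/3)e^{-u}` (equivalently
`(4/3)e^{-u/4} - (1/3)e^{-u} > (1+u/2)e^{-u/2}`), while the alternative plan
has strictly larger true detection probability `1 - e^{-u} > 1 - e^{-u/2}`. -/
theorem stmt_9 (u : ℝ) (hu : 0 < u) :
    (1 - (1 + u / 2) * Real.exp (-u / 2)
      > 1 - (4 / 3) * Real.exp (-u / 4) + (1 / 3) * Real.exp (-u)) ∧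
    ((4 / 3) * Real.exp (-u / 4) - (1 / 3) * Real.exp (-u)
      > (1 + u / 2) * Real.exp (-u / 2)) ∧
    (1 - Real.exp (-u) > 1 - Real.exp (-u / 2)) := by
  have h1 : Real.exp (-u / 4) = Real.exp (u / 4) * Real.exp (-u / 2) := by
    rw [← Real.exp_add]; congr 1; ring
  have h2 : Real.exp (-u) = Real.exp (-u / 2) * Real.exp (-u / 2) := by
    rw [← Real.exp_add]; congr 1; ring
  have h3 : Real.exp (u / 2) * Real.exp (-u / 2) = 1 := by
    rw [← Real.exp_add, ← Real.exp_zero]; congr 1; ring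
  have hb := Real.quadratic_le_exp_of_nonneg (x := u / 4) (by positivity)
  have hd := Real.quadratic_le_exp_of_nonneg (x := u / 2) (by positivity)
  have hc : 0 < Real.exp (-u / 2) := Real.exp_pos _
  have hq : Real.exp (-u / 2) < 1 - u / 2 + (u / 2) ^ 2 / 2 := by
    have h4 : (1 + u / 2 + (u / 2) ^ 2 / 2) * Real.exp (-u / 2) ≤ 1 := by
      exact (mul_le_mul_of_nonneg_right hd hc.le).trans h3.le
    have h5 : (1 + u / 2 + (u / 2) ^ 2 / 2) * (1 - u / 2 + (u / 2) ^ 2 / 2)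
        = 1 + (u / 2) ^ 4 / 4 := by ring
    have h6 : 0 < (u / 2) ^ 4 / 4 := by positivity
    have h7 : 0 < 1 + u / 2 + (u / 2) ^ 2 / 2 := by positivity
    exact lt_of_mul_lt_mul_left (by linarith) h7.le
  have key : 0 < Real.exp (-u / 2) *
      (4 / 3 * Real.exp (u / 4) - 1 / 3 * Real.exp (-u / 2) - (1 + u / 2)) :=
    mul_pos hc (by nlinarith)
  have hlt : Real.exp (-u) < Real.exp (-u / 2) := Real.exp_lt_exp.mpr (by linarith)
  refine ⟨?_, ?_, by linarith⟩
  · rw [h1, h2]; nlinarith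
  · rw [h1, h2]; nlinarith
end

section
/- Let σ₁, σ₂ > 0 with σ₁ ≠ σ₂ and let 0 < w < 1. Then w/σ₁ + (1−w)/σ₂ > 1/√(w σ₁² + (1−w) σ₂²). Consequently, for every K > 0, 1 − exp(−√(K/(π(wσ₁² + (1−w)σ₂²)))) < 1 − exp(−(w/σ₁ + (1−w)/σ₂)·√(K/π)): the true detection probability of the uniformly optimal plan based on the composite normal prior is strictly less than that of the composite plan built from the two individual uniformly optimal plans. -/
open Real

/-- Example 8 (continuous case), generalized: for `σ₁, σ₂ > 0` with `σ₁ ≠ σ₂`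
and `0 < w < 1`, `w/σ₁ + (1-w)/σ₂ > 1/√(wσ₁² + (1-w)σ₂²)`; consequently, for
every total effort `K > 0`, the true detection probability of the uniformly
optimal plan for the composite normal prior is strictly less than that of the
composite plan. -/
theorem stmt_11 (σ₁ σ₂ w : ℝ) (hσ₁ : 0 < σ₁) (hσ₂ : 0 < σ₂) (hne : σ₁ ≠ σ₂)
    (hw₀ : 0 < w) (hw₁ : w < 1) :
    (w / σ₁ + (1 - w) / σ₂ > 1 / Real.sqrt (w * σ₁ ^ 2 + (1 - w) * σ₂ ^ 2)) ∧
    (∀ K : ℝ, 0 < K →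
      1 - Real.exp (-Real.sqrt (K / (Real.pi * (w * σ₁ ^ 2 + (1 - w) * σ₂ ^ 2))))
        < 1 - Real.exp (-((w / σ₁ + (1 - w) / σ₂) * Real.sqrt (K / Real.pi)))) := by
  have hw : 0 < 1 - w := by linarith
  have hd : 0 < w * (1 - w) * (σ₁ - σ₂) ^ 2 :=
    mul_pos (mul_pos hw₀ hw) (sq_pos_iff.mpr (sub_ne_zero.mpr hne))
  have hm : 0 < w * σ₁ + (1 - w) * σ₂ := by positivity
  have hS : 0 < w * σ₁ ^ 2 + (1 - w) * σ₂ ^ 2 := by positivity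
  have h1 : w / σ₁ + (1 - w) / σ₂ > 1 / Real.sqrt (w * σ₁ ^ 2 + (1 - w) * σ₂ ^ 2) := by
    have hlt : w * σ₁ + (1 - w) * σ₂ < Real.sqrt (w * σ₁ ^ 2 + (1 - w) * σ₂ ^ 2) := by
      apply Real.lt_sqrt_of_sq_lt
      nlinarith [hd]
    have ha : 1 / Real.sqrt (w * σ₁ ^ 2 + (1 - w) * σ₂ ^ 2) < 1 / (w * σ₁ + (1 - w) * σ₂) :=
      one_div_lt_one_div_of_lt hm hlt
    have hb : 1 / (w * σ₁ + (1 - w) * σ₂) ≤ w / σ₁ + (1 - w) / σ₂ := by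
      rw [div_add_div _ _ hσ₁.ne' hσ₂.ne', div_le_div_iff₀ hm (mul_pos hσ₁ hσ₂)]
      nlinarith [hd]
    linarith
  refine ⟨h1, fun K hK => ?_⟩
  have hk : 0 < Real.sqrt (K / Real.pi) := Real.sqrt_pos.mpr (div_pos hK Real.pi_pos)
  have he : Real.sqrt (K / (Real.pi * (w * σ₁ ^ 2 + (1 - w) * σ₂ ^ 2)))
      = 1 / Real.sqrt (w * σ₁ ^ 2 + (1 - w) * σ₂ ^ 2) * Real.sqrt (K / Real.pi) := by
    rw [← div_div, Real.sqrt_div (div_pos hK Real.pi_pos).le]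
    ring
  rw [he]
  have := mul_lt_mul_of_pos_right h1 hk
  exact sub_lt_sub_left (Real.exp_lt_exp.mpr (neg_lt_neg this)) 1
end

section
/- Let X be a finite set, let π : X → ℝ be a prior with π(x) ≥ 0 for all x, ∑ₓ π(x) = 1, and π(x₀) > 0 for a fixed x₀ ∈ X. For each E ≥ 0 let f_E be any maximizer of ∑ₓ π(x)(1 − e^{−f(x)}) over allocations f : X → ℝ with f(x) ≥ 0 and ∑ₓ f(x) = E. Then the true detection probability of f_E at x₀ tends to one: for every ε > 0 there exists E₀ such that for every E ≥ E₀ and every such maximizer f_E, 1 − e^{−f_E(x₀)} > 1 − ε. -/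
open Finset

/-- Section 6, discrete case: let `X` be finite, `π` a prior with `π x₀ > 0`.
For any maximizer `f_E` of the subjective detection probability
`∑ x, π x (1 - e^{-f x})` over allocations with total effort `E`, the true
detection probability `1 - e^{-f_E x₀}` tends to one as `E → ∞`. -/
theorem stmt_13 (X : Type*) [Fintype X] (π : X → ℝ)
    (hπ0 : ∀ x, 0 ≤ π x) (hπ1 : ∑ x, π x = 1)
    (x₀ : X) (hx₀ : 0 < π x₀) :
    ∀ ε : ℝ, 0 < ε → ∃ E₀ : ℝ, ∀ E : ℝ, E₀ ≤ E → 0 ≤ E →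
      ∀ f : X → ℝ, (∀ x, 0 ≤ f x) → (∑ x, f x) = E →
        (∀ g : X → ℝ, (∀ x, 0 ≤ g x) → (∑ x, g x) = E →
          ∑ x, π x * (1 - Real.exp (-(g x))) ≤ ∑ x, π x * (1 - Real.exp (-(f x)))) →
        1 - Real.exp (-(f x₀)) > 1 - ε := by
  intro ε hε
  have hn : (0 : ℝ) < (Fintype.card X : ℝ) := by
    exact_mod_cast Fintype.card_pos_iff.mpr ⟨x₀⟩
  refine ⟨(Fintype.card X : ℝ) * (1 - Real.log (π x₀ * ε)), ?_⟩
  intro E hE hE0 f hf hfE hmax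
  have h := hmax (fun _ => E / (Fintype.card X : ℝ)) (fun _ => by positivity)
    (by
      rw [Finset.sum_const, Finset.card_univ, nsmul_eq_mul]
      field_simp)
  simp only [mul_sub, mul_one, Finset.sum_sub_distrib, ← Finset.sum_mul, hπ1, one_mul] at h
  have h1 : π x₀ * Real.exp (-(f x₀)) ≤ ∑ x, π x * Real.exp (-(f x)) :=
    Finset.single_le_sum (f := fun x => π x * Real.exp (-(f x)))
      (fun x _ => mul_nonneg (hπ0 x) (Real.exp_pos _).le) (Finset.mem_univ x₀)
  have hp : 0 < π x₀ * ε := mul_pos hx₀ hε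
  have h2 : 1 - Real.log (π x₀ * ε) ≤ E / (Fintype.card X : ℝ) := by
    rw [le_div_iff₀ hn]
    linarith
  have h3 : Real.exp (-(E / (Fintype.card X : ℝ))) < π x₀ * ε := by
    rw [← Real.lt_log_iff_exp_lt hp]
    linarith
  have h4 : π x₀ * Real.exp (-(f x₀)) < π x₀ * ε := by linarith
  have h5 := lt_of_mul_lt_mul_left h4 hx₀.le
  linarith
end
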